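/- Let c ∈ ℝ and b ≥ 0. Let k, N : ℕ → ℕ satisfy k(d) < d < N(d) for all large d, (N(d) - 2d)/√d → c, and k(d)/√d → b as d → ∞. Then Q_{d,k(d)}(N(d)) → Φ(-(c+b)/√2) / Φ(-c/√2) as d → ∞. -/

import Mathlib

open Filter Finset Real Topology

/-- `Q d k N = 2^k · (Σ_{i=0}^{d-k-1} C(N-k-1, i)) / (Σ_{i=0}^{d-1} C(N-1, i))`,
the normalized expected `k`-face number `E f_k(C_N)/C(N,k)` of the Cover–Efron cone. -/
noncomputable def Q (d k N : ℕ) : ℝ :=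
  2 ^ k * (∑ i ∈ Finset.range (d - k), ((N - k - 1).choose i : ℝ)) /
    (∑ i ∈ Finset.range d, ((N - 1).choose i : ℝ))

/-- The cumulative distribution function `Φ` of the standard normal distribution. -/
noncomputable def stdNormalCDF (x : ℝ) : ℝ :=
  (Real.sqrt (2 * Real.pi))⁻¹ * ∫ t in Set.Iic x, Real.exp (-t ^ 2 / 2)

/-! Dividing by powers of two turns `Q d k N` into the quotient of `P(Bin(N - k - 1, 1/2) < d - k)`
and `P(Bin(N - 1, 1/2) < d)`. Since `N - k - 1 ∼ 2d`, the standard deviations are asymptotic to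
`√(d/2)`, while the thresholds exceed the means by about `-(c + b)√d / 2` and `-c√d / 2`. By the
de Moivre–Laplace theorem with moving thresholds both probabilities converge to values of `Φ`, and
the quotient converges because `Φ > 0`. -/

open MeasureTheory ProbabilityTheory

section ConvergenceInDistribution

lemma map_prod_dirac_apply {Ω α β : Type*} [MeasurableSpace Ω] [MeasurableSpace α]
    [MeasurableSpace β] {μ : Measure Ω} [SFinite μ] {X : Ω → α} (hX : AEMeasurable X μ) (b : β)
    {s : Set (α × β)} (hs : MeasurableSet s) :
    ((μ.map X).prod (Measure.dirac b)) s = μ {ω | (X ω, b) ∈ s} := by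
  rw [Measure.prod_dirac, Measure.map_apply (by fun_prop) hs,
    Measure.map_apply_of_aemeasurable hX (measurable_prodMk_right hs)]
  rfl

variable {ι E Ω' : Type*} {Ω : ι → Type*} [∀ i, MeasurableSpace (Ω i)] [MeasurableSpace Ω']
  {μ : (i : ι) → Measure (Ω i)} [∀ i, IsProbabilityMeasure (μ i)]
  {μ' : Measure Ω'} [IsProbabilityMeasure μ'] {l : Filter ι}
  [LinearOrder E] [TopologicalSpace E] [OrderClosedTopology E] [SecondCountableTopology E]
  [TopologicalSpace.PseudoMetrizableSpace E] [MeasurableSpace E] [BorelSpace E]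
  {X : (i : ι) → Ω i → E} {Z : Ω' → E}

lemma tendsto_measure_setOf_lt_of_tendstoInDistribution {x : ι → E} {a : E}
    (hX : TendstoInDistribution X l Z μ μ') (hx : Tendsto x l (𝓝 a))
    (ha : μ' {ω | Z ω = a} = 0) :
    Tendsto (fun i ↦ μ i {ω | X i ω < x i}) l (𝓝 (μ' {ω | Z ω < a})) := by
  -- Pairing the law of `X i` with a Dirac mass at `x i` turns the moving half-line into the fixed
  -- set `{q | q.1 < q.2}`, to which the portmanteau theorem applies.
  have hlt : MeasurableSet {q : E × E | q.1 < q.2} := measurableSet_lt measurable_fst measurable_snd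
  have hprod := (ProbabilityMeasure.continuous_prod.tendsto _).comp
    (hX.tendsto.prodMk_nhds ((continuous_diracProba.tendsto a).comp hx))
  have hfrontier : (μ'.map Z).prod (Measure.dirac a) (frontier {q : E × E | q.1 < q.2}) = 0 := by
    refine measure_mono_null (frontier_lt_subset_eq continuous_fst continuous_snd) ?_
    rwa [map_prod_dirac_apply hX.aemeasurable_limit a
      (measurableSet_eq_fun measurable_fst measurable_snd)]
  have hlaw : ((μ'.map Z).prod (Measure.dirac a)) {q | q.1 < q.2} = μ' {ω | Z ω < a} :=
    map_prod_dirac_apply hX.aemeasurable_limit a hlt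
  rw [← hlaw]
  refine (ProbabilityMeasure.tendsto_measure_of_null_frontier_of_tendsto' hprod hfrontier).congr
    fun i ↦ ?_
  exact map_prod_dirac_apply (hX.forall_aemeasurable i) (x i) hlt

end ConvergenceInDistribution

section Gaussian

lemma stdNormalCDF_eq_gaussianReal_Iio (z : ℝ) :
    stdNormalCDF z = (gaussianReal 0 1).real (Set.Iio z) := by
  have : NullSingletonClass (gaussianReal 0 1) := nullSingletonClass_gaussianReal one_ne_zero
  rw [measureReal_congr Iio_ae_eq_Iic, measureReal_def,
    gaussianReal_apply_eq_integral _ one_ne_zero,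
    ENNReal.toReal_ofReal (integral_nonneg fun x ↦ gaussianPDFReal_nonneg _ _ _), stdNormalCDF,
    ← integral_const_mul]
  simp [gaussianPDFReal]

lemma stdNormalCDF_pos (z : ℝ) : 0 < stdNormalCDF z := by
  rw [stdNormalCDF_eq_gaussianReal_Iio, measureReal_def]
  refine ENNReal.toReal_pos (fun hnull ↦ ?_) (measure_ne_top _ _)
  have hvolume := gaussianReal_absolutelyContinuous' 0 one_ne_zero hnull
  simp [Real.volume_Iio] at hvolume

end Gaussian

section DeMoivreLaplace

lemma charFun_bernoulliMeasure (x y t : ℝ) (p : unitInterval) :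
    charFun Ber(x, y, p) t =
      p * Complex.exp (t * x * Complex.I) + (1 - p) * Complex.exp (t * y * Complex.I) := by
  rw [charFun_apply_real, integral_bernoulliMeasure]
  simp

lemma charFun_map_binomial (n : ℕ) (p : unitInterval) (x y t : ℝ) :
    charFun (Bin(n, p).map (fun j : ℕ ↦ j * x + (n - j) * y)) t =
      charFun Ber(x, y, p) t ^ n := by
  rw [charFun_apply_real, integral_map .of_discrete (by fun_prop), integral_binomial,
    charFun_bernoulliMeasure, add_pow, ← Nat.range_succ_eq_Iic]
  refine Finset.sum_congr rfl fun j hj ↦ ?_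
  have hjn : j ≤ n := Finset.mem_range_succ_iff.1 hj
  have hexp : Complex.exp (t * ((j * x + (n - j) * y : ℝ)) * Complex.I) =
      Complex.exp (t * x * Complex.I) ^ j * Complex.exp (t * y * Complex.I) ^ (n - j) := by
    rw [← Complex.exp_nat_mul, ← Complex.exp_nat_mul, ← Complex.exp_add]
    push_cast [hjn]
    ring_nf
  rw [hexp, Complex.real_smul, mul_pow, mul_pow]
  push_cast
  ring

lemma integral_id_standardized_bernoulliMeasure (p : unitInterval) :
    ∫ x : ℝ, id x ∂Ber((1 - p) / √(p * (1 - p)), -p / √(p * (1 - p)), p) = 0 := by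
  rw [integral_bernoulliMeasure]
  simp only [id, smul_eq_mul]
  ring

lemma integral_sq_standardized_bernoulliMeasure {p : unitInterval} (hp : p ∈ Set.Ioo 0 1) :
    ∫ x : ℝ, (id ^ 2 : ℝ → ℝ) x ∂Ber((1 - p) / √(p * (1 - p)), -p / √(p * (1 - p)), p) = 1 := by
  have hp0 : 0 < (p : ℝ) := hp.1
  have hq0 : 0 < 1 - (p : ℝ) := sub_pos.2 hp.2
  rw [integral_bernoulliMeasure]
  simp only [Pi.pow_apply, id, smul_eq_mul, div_pow, Real.sq_sqrt (mul_pos hp0 hq0).le]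
  field_simp
  ring

lemma tendstoInDistribution_standardized_binomial {p : unitInterval} (hp : p ∈ Set.Ioo 0 1) :
    TendstoInDistribution (fun (n j : ℕ) ↦ ((j : ℝ) - n * p) / √(n * (p * (1 - p)))) atTop id
      (fun n ↦ Bin(n, p)) (gaussianReal 0 1) where
  forall_aemeasurable _ := .of_discrete
  tendsto := by
    have hstd (n j : ℕ) : ((j : ℝ) - n * p) / √(n * (p * (1 - p))) = (√n)⁻¹ *
        (j * ((1 - p) / √(p * (1 - p))) + (n - j) * (-p / √(p * (1 - p)))) := by
      rw [Real.sqrt_mul n.cast_nonneg]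
      ring
    refine ProbabilityMeasure.tendsto_iff_tendsto_charFun.2 fun t ↦ ?_
    simp only [ProbabilityMeasure.coe_mk, hstd, Measure.map_id, charFun_gaussianReal,
      charFun_map_mul_comp .of_discrete, charFun_map_binomial]
    have hclt := tendsto_charFun_inv_sqrt_mul_pow aemeasurable_id
      (integral_id_standardized_bernoulliMeasure p) (integral_sq_standardized_bernoulliMeasure hp) t
    simpa [neg_div] using hclt

variable {ι : Type*} {l : Filter ι} {n m : ι → ℕ} {p : unitInterval}

lemma tendsto_binomial_real_Iio {z : ℝ} (hp : p ∈ Set.Ioo 0 1) (hn : Tendsto n l atTop)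
    (hz : Tendsto (fun i ↦ ((m i : ℝ) - n i * p) / √(n i * (p * (1 - p)))) l (𝓝 z)) :
    Tendsto (fun i ↦ Bin(n i, p).real (Set.Iio (m i))) l (𝓝 (stdNormalCDF z)) := by
  have hvar : 0 < (p : ℝ) * (1 - p) := mul_pos hp.1 (sub_pos.2 hp.2)
  have hclt := tendstoInDistribution_standardized_binomial hp
  have hclt_comp : TendstoInDistribution
      (fun i (j : ℕ) ↦ ((j : ℝ) - n i * p) / √(n i * (p * (1 - p)))) l id
      (fun i ↦ Bin(n i, p)) (gaussianReal 0 1) :=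
    ⟨fun i ↦ hclt.forall_aemeasurable (n i), hclt.aemeasurable_limit, hclt.tendsto.comp hn⟩
  have : NullSingletonClass (gaussianReal 0 1) := nullSingletonClass_gaussianReal one_ne_zero
  have hlim := tendsto_measure_setOf_lt_of_tendstoInDistribution hclt_comp hz
    (measure_singleton (μ := gaussianReal 0 1) z)
  rw [stdNormalCDF_eq_gaussianReal_Iio]
  refine ((ENNReal.tendsto_toReal (measure_ne_top _ _)).comp hlim).congr' ?_
  filter_upwards [hn.eventually_gt_atTop 0] with i hi
  have hsd : 0 < √(n i * (p * (1 - p))) := by positivity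
  have hset : {j : ℕ | ((j : ℝ) - n i * p) / √(n i * (p * (1 - p))) <
      ((m i : ℝ) - n i * p) / √(n i * (p * (1 - p)))} = Set.Iio (m i) := by
    ext j
    rw [Set.mem_ofPred_eq, Set.mem_Iio, div_lt_div_iff_of_pos_right hsd, sub_lt_sub_iff_right,
      Nat.cast_lt]
  rw [Function.comp_apply, hset, measureReal_def]

lemma tendsto_binomial_real_Iio_of_scale {s : ι → ℝ} {a ρ : ℝ} (hp : p ∈ Set.Ioo 0 1)
    (hs : Tendsto s l atTop) (hρ : 0 < ρ) (hn : Tendsto (fun i ↦ n i / s i) l (𝓝 ρ))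
    (hm : Tendsto (fun i ↦ ((m i : ℝ) - n i * p) / √(s i)) l (𝓝 a)) :
    Tendsto (fun i ↦ Bin(n i, p).real (Set.Iio (m i))) l
      (𝓝 (stdNormalCDF (a / √(ρ * (p * (1 - p)))))) := by
  have hvar : 0 < (p : ℝ) * (1 - p) := mul_pos hp.1 (sub_pos.2 hp.2)
  have hn_top : Tendsto n l atTop := by
    refine tendsto_natCast_atTop_iff.1 ((hn.pos_mul_atTop hρ hs).congr' ?_)
    filter_upwards [hs.eventually_ne_atTop 0] with i hi
    exact div_mul_cancel₀ _ hi
  refine tendsto_binomial_real_Iio hp hn_top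
    ((hm.div (hn.mul_const _).sqrt (by positivity)).congr' ?_)
  filter_upwards [hs.eventually_gt_atTop 0] with i hi
  rw [Pi.div_apply, div_mul_eq_mul_div, Real.sqrt_div' _ hi.le,
    div_div_div_cancel_right₀ (Real.sqrt_pos.2 hi).ne']

end DeMoivreLaplace

section FairBinomial

/-- The parameter `1 / 2` of a fair coin, in the type in which `binomial` takes its success
probability. -/
noncomputable def fairProb : unitInterval := ⟨1 / 2, by norm_num, by norm_num⟩

lemma coe_fairProb : (fairProb : ℝ) = 1 / 2 := rfl

lemma fairProb_mem_Ioo : fairProb ∈ Set.Ioo 0 1 :=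
  ⟨(one_half_pos : (0 : ℝ) < 1 / 2), (one_half_lt_one : (1 / 2 : ℝ) < 1)⟩

lemma binomial_fairProb_real_Iio (n m : ℕ) :
    Bin(n, fairProb).real (Set.Iio m) = (∑ i ∈ range m, (n.choose i : ℝ)) / 2 ^ n := by
  rw [← Finset.coe_Iio, Nat.Iio_eq_range, ← sum_measureReal_singleton, Finset.sum_div]
  refine Finset.sum_congr rfl fun i _ ↦ ?_
  rw [binomial_real_singleton, coe_fairProb]
  obtain hi | hi := le_or_gt i n
  · rw [sub_half, mul_assoc, ← pow_add, Nat.add_sub_cancel' hi, one_div_pow, mul_one_div]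
  · simp [Nat.choose_eq_zero_of_lt hi]

lemma Q_eq_binomial_div_binomial (d : ℕ) {k N : ℕ} (hkN : k < N) :
    Q d k N = Bin(N - k - 1, fairProb).real (Set.Iio (d - k)) /
      Bin(N - 1, fairProb).real (Set.Iio d) := by
  have hpow : (2 : ℝ) ^ (N - 1) = 2 ^ k * 2 ^ (N - k - 1) := by
    rw [← pow_add]
    congr 1
    omega
  rw [binomial_fairProb_real_Iio, binomial_fairProb_real_Iio, hpow, Q]
  field_simp

end FairBinomial

lemma tendsto_div_zero_of_tendsto_div_sqrt {ι : Type*} {l : Filter ι} {u s : ι → ℝ} {a : ℝ}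
    (hs : Tendsto s l atTop) (hu : Tendsto (fun i ↦ u i / √(s i)) l (𝓝 a)) :
    Tendsto (fun i ↦ u i / s i) l (𝓝 0) := by
  refine (hu.div_atTop (tendsto_sqrt_atTop.comp hs)).congr' ?_
  filter_upwards [hs.eventually_ge_atTop 0] with i hi
  rw [Function.comp_apply, div_div, Real.mul_self_sqrt hi]

section CoverEfron

lemma natCast_sub_sub_one {R : Type*} [AddGroupWithOne R] {k N : ℕ} (hkN : k < N) :
    ((N - k - 1 : ℕ) : R) = N - k - 1 := by
  rw [Nat.cast_sub (Nat.sub_pos_of_lt hkN), Nat.cast_sub hkN.le, Nat.cast_one]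

lemma tendsto_one_div_sqrt_natCast_atTop : Tendsto (fun d : ℕ ↦ 1 / √(d : ℝ)) atTop (𝓝 0) :=
  tendsto_const_nhds.div_atTop (tendsto_sqrt_atTop.comp tendsto_natCast_atTop_atTop)

variable {c b : ℝ} {k N : ℕ → ℕ}

lemma tendsto_sub_sub_one_div (hN : ∀ᶠ d in atTop, k d < N d)
    (hNc : Tendsto (fun d : ℕ ↦ ((N d : ℝ) - 2 * d) / √d) atTop (𝓝 c))
    (hkb : Tendsto (fun d : ℕ ↦ (k d : ℝ) / √d) atTop (𝓝 b)) :
    Tendsto (fun d : ℕ ↦ ((N d - k d - 1 : ℕ) : ℝ) / d) atTop (𝓝 2) := by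
  have hfluct := (hNc.sub hkb).sub tendsto_one_div_sqrt_natCast_atTop
  simp only [← sub_div] at hfluct
  have hdiff :=
    (tendsto_div_zero_of_tendsto_div_sqrt tendsto_natCast_atTop_atTop hfluct).const_add 2
  rw [add_zero] at hdiff
  refine hdiff.congr' ?_
  filter_upwards [hN, eventually_gt_atTop 0] with d hkN hd
  rw [natCast_sub_sub_one hkN]
  field_simp
  ring

lemma tendsto_sub_sub_half_mul_div_sqrt (hk : ∀ᶠ d in atTop, k d ≤ d)
    (hN : ∀ᶠ d in atTop, k d < N d)
    (hNc : Tendsto (fun d : ℕ ↦ ((N d : ℝ) - 2 * d) / √d) atTop (𝓝 c))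
    (hkb : Tendsto (fun d : ℕ ↦ (k d : ℝ) / √d) atTop (𝓝 b)) :
    Tendsto (fun d : ℕ ↦ (((d - k d : ℕ) : ℝ) - (N d - k d - 1 : ℕ) * (1 / 2)) / √d) atTop
      (𝓝 (-(c + b) / 2)) := by
  have hsum := ((hNc.add hkb).neg.add tendsto_one_div_sqrt_natCast_atTop).div_const 2
  rw [add_zero] at hsum
  refine hsum.congr' ?_
  filter_upwards [hk, hN] with d hkd hkN
  rw [natCast_sub_sub_one hkN, Nat.cast_sub hkd]
  ring

lemma tendsto_binomial_fairProb_real_Iio_sub (hk : ∀ᶠ d in atTop, k d ≤ d)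
    (hN : ∀ᶠ d in atTop, k d < N d)
    (hNc : Tendsto (fun d : ℕ ↦ ((N d : ℝ) - 2 * d) / √d) atTop (𝓝 c))
    (hkb : Tendsto (fun d : ℕ ↦ (k d : ℝ) / √d) atTop (𝓝 b)) :
    Tendsto (fun d ↦ Bin(N d - k d - 1, fairProb).real (Set.Iio (d - k d))) atTop
      (𝓝 (stdNormalCDF (-(c + b) / √2))) := by
  have hscale : -(c + b) / 2 / √(2 * (fairProb * (1 - fairProb))) = -(c + b) / √2 := by
    rw [coe_fairProb, show (2 : ℝ) * (1 / 2 * (1 - 1 / 2)) = 2 / 2 ^ 2 by norm_num,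
      Real.sqrt_div two_pos.le, Real.sqrt_sq two_pos.le, div_div_div_cancel_right₀ two_ne_zero]
  rw [← hscale]
  exact tendsto_binomial_real_Iio_of_scale fairProb_mem_Ioo tendsto_natCast_atTop_atTop two_pos
    (tendsto_sub_sub_one_div hN hNc hkb) (tendsto_sub_sub_half_mul_div_sqrt hk hN hNc hkb)

end CoverEfron

theorem Q_limit_at_half_zero (c b : ℝ) (hb : 0 ≤ b) (k N : ℕ → ℕ)
    (hkN : ∀ᶠ d in atTop, k d < d ∧ d < N d)
    (h1 : Tendsto (fun d : ℕ => ((N d : ℝ) - 2 * d) / Real.sqrt d) atTop (𝓝 c))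
    (h2 : Tendsto (fun d : ℕ => (k d : ℝ) / Real.sqrt d) atTop (𝓝 b)) :
    Tendsto (fun d : ℕ => Q d (k d) (N d)) atTop
      (𝓝 (stdNormalCDF (-(c + b) / Real.sqrt 2) / stdNormalCDF (-c / Real.sqrt 2))) := by
  have hnum := tendsto_binomial_fairProb_real_Iio_sub (hkN.mono fun d h ↦ h.1.le)
    (hkN.mono fun d h ↦ h.1.trans h.2) h1 h2
  have hden := tendsto_binomial_fairProb_real_Iio_sub (k := fun _ ↦ 0) (b := 0)
    (.of_forall Nat.zero_le) (hkN.mono fun d h ↦ Nat.zero_lt_of_lt h.2) h1 (by simp)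
  simp only [add_zero, Nat.sub_zero] at hden
  refine (hnum.div hden (stdNormalCDF_pos _).ne').congr' ?_
  filter_upwards [hkN] with d h
  exact (Q_eq_binomial_div_binomial d (h.1.trans h.2)).symm
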